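/- arXiv:2401.03807 — 6 statements merged into one kernel-verified Lean document; each statement's English description precedes it below -/
import Mathlib

section
/- For every real number σ > 0, one has σ ≤ Σ_{k∈ℤ} exp(−πk²/σ²) ≤ 1 + σ. -/
theorem gauss_anti (b : ℝ) (hb : 0 < b) :
    AntitoneOn (fun x : ℝ => Real.exp (-b * x ^ 2)) (Set.Ici 0) := by
  intro x hx y hy hxy
  simp only [Set.mem_Ici] at hx hy
  apply Real.exp_le_exp.mpr
  have : x ^ 2 ≤ y ^ 2 := by gcongr
  nlinarith

theorem gauss_summable_nat (b : ℝ) (hb : 0 < b) :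
    Summable (fun n : ℕ => Real.exp (-b * (n : ℝ) ^ 2)) :=
  (gauss_anti b hb).summable_of_integrableOn_Ioi_zero
    (integrable_exp_neg_mul_sq hb).integrableOn (fun x _ => (Real.exp_pos _).le)

theorem gauss_summable_int (b : ℝ) (hb : 0 < b) :
    Summable (fun n : ℤ => Real.exp (-b * (n : ℝ) ^ 2)) := by
  apply Summable.of_nat_of_neg
  · simpa using gauss_summable_nat b hb
  · simpa using gauss_summable_nat b hb

/-- For every real number `σ > 0`, one has
`σ ≤ Σ_{k ∈ ℤ} exp(−π k² / σ²) ≤ 1 + σ`. -/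
theorem stmt_0 (σ : ℝ) (hσ : 0 < σ) :
    σ ≤ (∑' k : ℤ, Real.exp (-Real.pi * (k : ℝ) ^ 2 / σ ^ 2)) ∧
      (∑' k : ℤ, Real.exp (-Real.pi * (k : ℝ) ^ 2 / σ ^ 2)) ≤ 1 + σ := by
  have hpi := Real.pi_pos
  constructor
  · have h := Real.tsum_exp_neg_mul_int_sq (a := σ ^ 2) (by positivity)
    have hs : (σ ^ 2) ^ (1 / 2 : ℝ) = σ := by
      rw [← Real.sqrt_eq_rpow, Real.sqrt_sq hσ.le]
    rw [hs] at h
    have h1 : (1 : ℝ) ≤ ∑' n : ℤ, Real.exp (-Real.pi * σ ^ 2 * (n : ℝ) ^ 2) := by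
      have hsum := gauss_summable_int (Real.pi * σ ^ 2) (by positivity)
      simp only [← neg_mul] at hsum
      have := hsum.le_tsum 0 (fun j _ => (Real.exp_pos _).le)
      simpa using this
    have h2 : (∑' k : ℤ, Real.exp (-Real.pi * (k : ℝ) ^ 2 / σ ^ 2)) =
        ∑' n : ℤ, Real.exp (-Real.pi / σ ^ 2 * (n : ℝ) ^ 2) := by
      congr 1; ext k; congr 1; ring
    rw [h2]
    rw [h, one_div, inv_mul_eq_div, le_div_iff₀ hσ] at h1
    linarith
  · set b := Real.pi / σ ^ 2 with hb
    have hb0 : 0 < b := by positivity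
    have h2 : (∑' k : ℤ, Real.exp (-Real.pi * (k : ℝ) ^ 2 / σ ^ 2)) =
        ∑' n : ℤ, Real.exp (-b * (n : ℝ) ^ 2) := by
      congr 1; ext k; congr 1; rw [hb]; ring
    have hS := gauss_summable_nat b hb0
    have hS1 := (summable_nat_add_iff 1).mpr hS
    have key := (gauss_anti b hb0).tsum_add_one_le_integral
      (integrable_exp_neg_mul_sq hb0).integrableOn (fun x _ => (Real.exp_pos _).le)
    rw [integral_gaussian_Ioi] at key
    have hsq : Real.sqrt (Real.pi / b) = σ := by
      rw [hb, div_div_cancel₀ hpi.ne', Real.sqrt_sq hσ.le]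
    rw [hsq] at key
    push_cast at hS1
    have hI := HasSum.of_add_one_of_neg_add_one
      (f := fun n : ℤ => Real.exp (-b * (n : ℝ) ^ 2))
      (m := ∑' n : ℕ, Real.exp (-b * ((n : ℝ) + 1) ^ 2))
      (m' := ∑' n : ℕ, Real.exp (-b * ((n : ℝ) + 1) ^ 2))
      (by push_cast; exact hS1.hasSum)
      (by
        push_cast
        simp only [neg_sq, ← neg_add]
        convert hS1.hasSum using 4)
    rw [h2, hI.tsum_eq]
    push_cast at key
    simp only [Int.cast_zero, ne_eq, OfNat.ofNat_ne_zero, not_false_eq_true, zero_pow, mul_zero,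
      Real.exp_zero]
    linarith
end

section
/- Let m ≥ 1 be an integer and σ > 0, σ' ≥ σ/√(2π) be real numbers. Then Σ_{x∈ℤ^m, ‖x‖ > σ'·√m} exp(−π‖x‖²/σ²) ≤ ((σ'/σ)·√(2πe)·exp(−πσ'²/σ²))^m · Σ_{x∈ℤ^m} exp(−π‖x‖²/σ²). -/
theorem aux_summable {a : ℝ} (ha : 0 < a) :
    Summable (fun n : ℤ => Real.exp (-Real.pi * a * (n : ℝ) ^ 2)) := by
  have h := summable_pow_mul_jacobiTheta₂_term_bound 0 ha 0
  refine h.congr fun n => ?_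
  simp only [pow_zero, one_mul]
  congr 1
  ring

theorem aux_theta {a b : ℝ} (hb : 0 < b) (hab : b ≤ a) :
    ∑' n : ℤ, Real.exp (-Real.pi * b * (n : ℝ) ^ 2) ≤
      Real.sqrt (a / b) * ∑' n : ℤ, Real.exp (-Real.pi * a * (n : ℝ) ^ 2) := by
  have ha : 0 < a := hb.trans_le hab
  have hs : ∀ t : ℝ, 0 < t → Summable (fun n : ℤ => Real.exp (-Real.pi / t * (n : ℝ) ^ 2)) := by
    intro t ht
    refine (aux_summable (inv_pos.mpr ht)).congr fun n => ?_
    rw [div_eq_mul_inv]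
  rw [Real.tsum_exp_neg_mul_int_sq ha, Real.tsum_exp_neg_mul_int_sq hb,
    ← Real.sqrt_eq_rpow, ← Real.sqrt_eq_rpow, Real.sqrt_div ha.le, ← mul_assoc]
  have hsa := Real.sqrt_pos.mpr ha
  have hsb := Real.sqrt_pos.mpr hb
  have e : √a / √b * (1 / √a) = 1 / √b := by field_simp
  rw [e]
  refine mul_le_mul_of_nonneg_left ?_ (by positivity)
  refine (hs b hb).tsum_le_tsum (fun n => ?_) (hs a ha)
  apply Real.exp_le_exp.mpr
  refine mul_le_mul_of_nonneg_right ?_ (sq_nonneg _)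
  rw [neg_div, neg_div]
  exact neg_le_neg (div_le_div_of_nonneg_left Real.pi_pos.le hb hab)

theorem aux_prod (f : ℤ → ℝ) (hf : 0 ≤ f) (S : ℝ) (h : HasSum f S) (n : ℕ) :
    HasSum (fun x : Fin n → ℤ => ∏ i, f (x i)) (S ^ n) := by
  induction n with
  | zero => simpa using hasSum_unique (fun x : Fin 0 → ℤ => ∏ i, f (x i))
  | succ n ih =>
    have h0 : (0 : (Fin n → ℤ) → ℝ) ≤ fun x : Fin n → ℤ => ∏ i, f (x i) :=
      fun x => Finset.prod_nonneg fun i _ => hf (x i)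
    have key : HasSum (fun p : ℤ × (Fin n → ℤ) => f p.1 * ∏ i, f (p.2 i)) (S * S ^ n) :=
      HasSum.mul (f := f) (g := fun x : Fin n → ℤ => ∏ i, f (x i)) h ih
        (Summable.mul_of_nonneg (f := f) (g := fun x : Fin n → ℤ => ∏ i, f (x i))
          h.summable ih.summable hf h0)
    rw [pow_succ']
    refine ((Fin.consEquiv (fun _ : Fin (n + 1) => ℤ)).hasSum_iff).mp ?_
    have e : (fun x : Fin (n + 1) → ℤ => ∏ i, f (x i)) ∘ (Fin.consEquiv (fun _ : Fin (n + 1) => ℤ))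
        = fun p : ℤ × (Fin n → ℤ) => f p.1 * ∏ i, f (p.2 i) := by
      funext p
      simp [Fin.consEquiv, Fin.prod_univ_succ]
    rw [e]
    exact key

theorem aux_multi {a : ℝ} (ha : 0 < a) (n : ℕ) :
    HasSum (fun x : Fin n → ℤ => Real.exp (-Real.pi * a * ∑ i, (x i : ℝ) ^ 2))
      ((∑' n : ℤ, Real.exp (-Real.pi * a * (n : ℝ) ^ 2)) ^ n) := by
  have := aux_prod _ (fun n => (Real.exp_pos _).le) _ (aux_summable ha).hasSum n
  refine this.congr_fun ?_ 
  intro x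
  rw [Finset.mul_sum, Real.exp_sum]

/-- Gaussian tail bound over the integer lattice (adapted from Banaszczyk):
for `m ≥ 1`, `σ > 0`, `σ' ≥ σ/√(2π)`,
`Σ_{x ∈ ℤ^m, ‖x‖ > σ'√m} ρ_σ(x) ≤ ((σ'/σ)·√(2πe)·exp(−πσ'²/σ²))^m · ρ_σ(ℤ^m)`,
where `ρ_σ(x) = exp(−π‖x‖²/σ²)`. -/
theorem stmt_1 (m : ℕ) (hm : 1 ≤ m) (σ σ' : ℝ) (hσ : 0 < σ)
    (hσ' : σ / Real.sqrt (2 * Real.pi) ≤ σ') :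
    (∑' x : {x : Fin m → ℤ // σ' * Real.sqrt m < Real.sqrt (∑ i, ((x i : ℝ)) ^ 2)},
        Real.exp (-Real.pi * (∑ i, ((x.1 i : ℝ)) ^ 2) / σ ^ 2))
      ≤ (σ' / σ * Real.sqrt (2 * Real.pi * Real.exp 1) *
            Real.exp (-Real.pi * σ' ^ 2 / σ ^ 2)) ^ m *
        ∑' x : Fin m → ℤ, Real.exp (-Real.pi * (∑ i, ((x i : ℝ)) ^ 2) / σ ^ 2) := by

  have hpi := Real.pi_pos
  have h2pi : 0 < Real.sqrt (2 * Real.pi) := Real.sqrt_pos.mpr (by positivity)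
  have hσ'0 : 0 < σ' := lt_of_lt_of_le (by positivity) hσ'
  set a : ℝ := 1 / σ ^ 2 with ha
  set b : ℝ := 1 / (2 * Real.pi * σ' ^ 2) with hb
  have ha0 : 0 < a := by positivity
  have hb0 : 0 < b := by positivity
  have hle : σ ^ 2 ≤ 2 * Real.pi * σ' ^ 2 := by
    rw [div_le_iff₀ h2pi] at hσ'
    calc σ ^ 2 ≤ (σ' * Real.sqrt (2 * Real.pi)) ^ 2 := by gcongr
      _ = _ := by rw [mul_pow, Real.sq_sqrt (by positivity)]; ring
  have hab : b ≤ a := one_div_le_one_div_of_le (by positivity) hle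
  have hform : ∀ q : ℝ, -Real.pi * q / σ ^ 2 = -Real.pi * a * q := by
    intro q; rw [ha]; ring
  simp only [hform]
  have hA := aux_multi ha0 m
  have hB := aux_multi hb0 m
  rw [hA.tsum_eq]
  set K : ℝ := Real.exp (-Real.pi * (a - b) * σ' ^ 2) with hK
  have hK0 : 0 < K := Real.exp_pos _
  have step1 : (∑' x : {x : Fin m → ℤ // σ' * Real.sqrt m < Real.sqrt (∑ i, ((x i : ℝ)) ^ 2)},
        Real.exp (-Real.pi * a * (∑ i, ((x.1 i : ℝ)) ^ 2))) ≤
      K ^ m * (∑' n : ℤ, Real.exp (-Real.pi * b * (n : ℝ) ^ 2)) ^ m := by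
    have hB' := hB.mul_left (K ^ m)
    rw [← hB'.tsum_eq]
    refine le_trans ?_ (hB'.summable.tsum_subtype_le _
      {x : Fin m → ℤ | σ' * Real.sqrt m < Real.sqrt (∑ i, ((x i : ℝ)) ^ 2)}
      (fun x => by positivity))
    refine Summable.tsum_le_tsum ?_ (hA.summable.subtype _) (hB'.summable.subtype _)
    rintro ⟨x, hx⟩
    simp only
    rw [hK, ← Real.exp_nat_mul, ← Real.exp_add]
    apply Real.exp_le_exp.mpr
    have hq : σ' ^ 2 * m ≤ ∑ i, ((x i : ℝ)) ^ 2 := by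
      have h0 : 0 ≤ ∑ i, ((x i : ℝ)) ^ 2 := Finset.sum_nonneg fun i _ => sq_nonneg _
      have h1 : (σ' * Real.sqrt m) ^ 2 ≤ (Real.sqrt (∑ i, ((x i : ℝ)) ^ 2)) ^ 2 :=
        pow_le_pow_left₀ (by positivity) hx.le 2
      rwa [mul_pow, Real.sq_sqrt (by positivity), Real.sq_sqrt h0] at h1
    have h3 : 0 ≤ Real.pi * (a - b) * (∑ i, ((x i : ℝ)) ^ 2 - σ' ^ 2 * m) :=
      mul_nonneg (mul_nonneg hpi.le (by linarith)) (by linarith)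
    nlinarith [h3]
  refine step1.trans ?_
  rw [← mul_pow, ← mul_pow]
  refine pow_le_pow_left₀ (mul_nonneg hK0.le (tsum_nonneg fun _ => (Real.exp_pos _).le)) ?_ m
  have h4 := mul_le_mul_of_nonneg_left (aux_theta hb0 hab) hK0.le
  refine h4.trans (le_of_eq ?_)
  rw [← mul_assoc]
  congr 1
  have e1 : Real.sqrt (a / b) = σ' / σ * Real.sqrt (2 * Real.pi) := by
    rw [Real.sqrt_eq_iff_mul_self_eq (by positivity) (by positivity)]
    rw [mul_mul_mul_comm, Real.mul_self_sqrt (by positivity), ha, hb]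
    field_simp
  have e2 : K = Real.sqrt (Real.exp 1) * Real.exp (-Real.pi * a * σ' ^ 2) := by
    rw [hK, ← Real.exp_half, ← Real.exp_add]
    congr 1
    rw [hb]
    field_simp
    ring
  rw [e1, e2, Real.sqrt_mul (by positivity : (0 : ℝ) ≤ 2 * Real.pi) (Real.exp 1)]
  ring
end

section
/- Let m ≥ 1 and q ≥ 2 be integers and σ > 0 a real number with q ≥ 2σ√m. Then for every x ∈ ℤ^m ∩ (−q/2, q/2]^m one has D_{ℤ^m,σ}(x) ≤ ϑ_{σ,q}(x) ≤ D_{ℤ^m,σ}(x) + exp(−q²/(4σ²)) and √(D_{ℤ^m,σ}(x)) ≤ √(ϑ_{σ,q}(x)) ≤ √(D_{ℤ^m,σ}(x)) + exp(−q²/(8σ²)). -/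
/-- `ρ_σ(ℤ^m) = Σ_{k ∈ ℤ^m} exp(−π‖k‖²/σ²)`. -/
noncomputable def rhoZm (σ : ℝ) (m : ℕ) : ℝ :=
  ∑' k : Fin m → ℤ, Real.exp (-Real.pi * (∑ i, ((k i : ℝ)) ^ 2) / σ ^ 2)

/-- Folded discrete Gaussian `ϑ_{σ,q}` on `(ℤ/qℤ)^m`, via the representative
`x̄ ∈ ℤ^m ∩ (−q/2, q/2]^m` of each coordinate (`ZMod.valMinAbs`). -/
noncomputable def thetaM (σ : ℝ) (q m : ℕ) (x : Fin m → ZMod q) : ℝ :=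
  (∑' k : Fin m → ℤ,
      Real.exp (-Real.pi * (∑ i, (((x i).valMinAbs : ℝ) + q * k i) ^ 2) / σ ^ 2)) / rhoZm σ m

/-- Discrete Gaussian `D_{ℤ^m,σ}(x) = ρ_σ(x)/ρ_σ(ℤ^m)`. -/
noncomputable def Dgauss (σ : ℝ) (m : ℕ) (x : Fin m → ℤ) : ℝ :=
  Real.exp (-Real.pi * (∑ i, ((x i : ℝ)) ^ 2) / σ ^ 2) / rhoZm σ m

/-- Unnormalised Gaussian on `ℤ^m`. -/
noncomputable def gaussZ (σ : ℝ) (m : ℕ) (k : Fin m → ℤ) : ℝ :=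
  Real.exp (-Real.pi * (∑ i, ((k i : ℝ)) ^ 2) / σ ^ 2)

lemma gaussZ_pos (σ : ℝ) (m : ℕ) (k : Fin m → ℤ) : 0 < gaussZ σ m k := Real.exp_pos _

lemma summable_one_dim (σ : ℝ) (hσ : 0 < σ) :
    Summable (fun k : ℤ => Real.exp (-Real.pi * ((k : ℝ)) ^ 2 / σ ^ 2)) := by
  have h := summable_pow_mul_jacobiTheta₂_term_bound 0 (T := 1 / σ ^ 2) (by positivity) 0
  refine h.congr fun k => ?_
  rw [pow_zero, one_mul]
  congr 1
  ring

lemma summable_gaussZ (σ : ℝ) (hσ : 0 < σ) (m : ℕ) : Summable (gaussZ σ m) := by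
  induction m with
  | zero => exact (hasSum_fintype _).summable
  | succ m ih =>
    have h := (summable_one_dim σ hσ).mul_of_nonneg ih (fun _ => (Real.exp_pos _).le)
      (fun _ => (gaussZ_pos _ _ _).le)
    rw [← (Fin.consEquiv (fun _ : Fin (m + 1) => ℤ)).summable_iff]
    refine h.congr fun p => ?_
    simp only [gaussZ, Function.comp, Fin.consEquiv_apply, Fin.sum_univ_succ, Fin.cons_zero,
      Fin.cons_succ, ← Real.exp_add]
    congr 1
    ring

lemma tsum_double (σ : ℝ) (hσ : 0 < σ) (m : ℕ) :
    ∑' k, gaussZ (2 * σ) m k ≤ 3 ^ m * ∑' k, gaussZ σ m k := by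
  have hs := summable_gaussZ σ hσ m
  let e : (Fin m → ℤ) → (Fin m → ℤ) × (Fin m → Fin 3) := fun k =>
    (fun i => (k i).tdiv 2, fun i => if (k i).tmod 2 = 0 then 0 else if (k i).tmod 2 = 1 then 1 else 2)
  have he : Function.Injective e := by
    intro a b hab
    simp only [e, Prod.mk.injEq] at hab
    funext i
    have h1 := congrFun hab.1 i
    have h2 := congrFun hab.2 i
    have ha := Int.mul_tdiv_add_tmod (a i) 2
    have hb := Int.mul_tdiv_add_tmod (b i) 2
    have ha1 := Int.tmod_lt_of_pos (a i) (b := 2) (by norm_num)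
    have ha2 := Int.tmod_lt_of_pos (-(a i)) (b := 2) (by norm_num)
    rw [Int.neg_tmod] at ha2
    have hb1 := Int.tmod_lt_of_pos (b i) (b := 2) (by norm_num)
    have hb2 := Int.tmod_lt_of_pos (-(b i)) (b := 2) (by norm_num)
    rw [Int.neg_tmod] at hb2
    split_ifs at h2 <;> first | omega | (exact absurd h2 (by decide))
  let F : (Fin m → ℤ) × (Fin m → Fin 3) → ℝ := fun p => gaussZ σ m p.1 * 1
  have hF : Summable F := hs.mul_of_nonneg (g := fun _ : Fin m → Fin 3 => (1 : ℝ))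
    (hasSum_fintype _).summable (fun _ => (gaussZ_pos _ _ _).le) (fun _ => zero_le_one)
  have hFs : ∑' p, F p = 3 ^ m * ∑' k, gaussZ σ m k := by
    rw [hF.tsum_prod]
    simp only [F, mul_one, tsum_fintype, Finset.sum_const, Finset.card_univ, Fintype.card_pi,
      Fintype.card_fin, Finset.prod_const, nsmul_eq_mul]
    rw [tsum_mul_left]
    push_cast
    rfl
  rw [← hFs]
  refine Summable.tsum_le_tsum_of_inj e he (fun p _ => ?_) (fun k => ?_)
    (summable_gaussZ (2 * σ) (by positivity) m) hF
  · exact mul_nonneg (gaussZ_pos _ _ _).le zero_le_one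
  · simp only [F, e, gaussZ, mul_one]
    apply Real.exp_le_exp.mpr
    rw [div_le_div_iff₀ (by positivity) (by positivity)]
    have hsum : 4 * ∑ i, (((k i).tdiv 2 : ℤ) : ℝ) ^ 2 ≤ ∑ i, ((k i : ℤ) : ℝ) ^ 2 := by
      rw [Finset.mul_sum]
      refine Finset.sum_le_sum fun i _ => ?_
      have hk : 4 * ((k i).tdiv 2) ^ 2 ≤ (k i) ^ 2 := by
        have h1 : |2 * (k i).tdiv 2| ≤ |k i| := by
          have h0 := Int.mul_tdiv_add_tmod (k i) 2
          rcases le_total 0 (k i) with h | h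
          · have := Int.tmod_nonneg 2 h
            have := Int.tdiv_nonneg h (by norm_num : (0:ℤ) ≤ 2)
            rw [abs_of_nonneg (by omega), abs_of_nonneg h]; omega
          · have h2 : (k i).tdiv 2 ≤ 0 := by
              have := Int.tdiv_nonneg (a := -(k i)) (b := 2) (by omega) (by norm_num)
              rw [Int.neg_tdiv] at this; omega
            have h3 : (k i).tmod 2 ≤ 0 := by
              have := Int.tmod_nonneg 2 (a := -(k i)) (by omega)
              rw [Int.neg_tmod] at this; omega
            rw [abs_of_nonpos (by omega), abs_of_nonpos h]; omega
        have := sq_le_sq.mpr h1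
        linarith
      exact_mod_cast hk
    have hp : 0 < Real.pi * σ ^ 2 := by positivity
    nlinarith [mul_le_mul_of_nonneg_left hsum hp.le]

lemma final_const (m : ℕ) (t : ℝ) (ht : (m : ℝ) ≤ t) :
    Real.exp (-(3 / 4) * Real.pi * t) * 3 ^ m ≤ Real.exp (-t) := by
  have h3 : (3 : ℝ) ≤ Real.exp (5 / 4) := by
    have h1 := Real.exp_one_gt_d9
    have h2 := Real.add_one_le_exp (1 / 4 : ℝ)
    have : Real.exp (5 / 4) = Real.exp 1 * Real.exp (1 / 4) := by
      rw [← Real.exp_add]; norm_num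
    rw [this]; nlinarith
  have h3m : (3 : ℝ) ^ m ≤ Real.exp (m * (5 / 4)) := by
    rw [Real.exp_nat_mul]; gcongr
  have hm0 : (0 : ℝ) ≤ m := Nat.cast_nonneg m
  calc _ ≤ Real.exp (-(3 / 4) * Real.pi * t) * Real.exp (m * (5 / 4)) := by gcongr
    _ = Real.exp (-(3 / 4) * Real.pi * t + m * (5 / 4)) := (Real.exp_add _ _).symm
    _ ≤ _ := by
      apply Real.exp_le_exp.mpr
      nlinarith [Real.pi_gt_d2]

lemma coord_bound (q : ℕ) (x k : ℤ) (hk : k ≠ 0)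
    (hx : -(q : ℝ) / 2 < (x : ℝ) ∧ (x : ℝ) ≤ (q : ℝ) / 2) :
    (q : ℝ) ^ 2 / 4 ≤ ((x + q * k : ℤ) : ℝ) ^ 2 := by
  push_cast
  have hq : (0 : ℝ) ≤ q := Nat.cast_nonneg q
  rcases lt_or_gt_of_ne hk with h | h
  · have : (k : ℝ) ≤ -1 := by exact_mod_cast (by omega : k ≤ -1)
    nlinarith [mul_le_mul_of_nonneg_left this hq]
  · have : (1 : ℝ) ≤ k := by exact_mod_cast h
    nlinarith [mul_le_mul_of_nonneg_left this hq]

/-- For `m ≥ 1`, `q ≥ 2`, `σ > 0` with `q ≥ 2σ√m`, and every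
`x ∈ ℤ^m ∩ (−q/2, q/2]^m`:
`D_{ℤ^m,σ}(x) ≤ ϑ_{σ,q}(x) ≤ D_{ℤ^m,σ}(x) + exp(−q²/(4σ²))` and
`√D_{ℤ^m,σ}(x) ≤ √ϑ_{σ,q}(x) ≤ √D_{ℤ^m,σ}(x) + exp(−q²/(8σ²))`,
where `ϑ_{σ,q}` is evaluated at the class of `x` in `(ℤ/qℤ)^m`. -/
theorem stmt_2 (m q : ℕ) (σ : ℝ) (hm : 1 ≤ m) (hq : 2 ≤ q) (hσ : 0 < σ)
    (hqs : 2 * σ * Real.sqrt m ≤ q) (x : Fin m → ℤ)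
    (hx : ∀ i, -(q : ℝ) / 2 < (x i : ℝ) ∧ (x i : ℝ) ≤ (q : ℝ) / 2) :
    Dgauss σ m x ≤ thetaM σ q m (fun i => (x i : ZMod q)) ∧
      thetaM σ q m (fun i => (x i : ZMod q)) ≤
        Dgauss σ m x + Real.exp (-(q : ℝ) ^ 2 / (4 * σ ^ 2)) ∧
      Real.sqrt (Dgauss σ m x) ≤ Real.sqrt (thetaM σ q m (fun i => (x i : ZMod q))) ∧
      Real.sqrt (thetaM σ q m (fun i => (x i : ZMod q))) ≤
        Real.sqrt (Dgauss σ m x) + Real.exp (-(q : ℝ) ^ 2 / (8 * σ ^ 2)) := by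
  have hq0 : (0 : ℝ) < q := by exact_mod_cast (by omega : 0 < q)
  have : NeZero q := ⟨by omega⟩
  have hv : ∀ i, ((x i : ZMod q)).valMinAbs = x i := by
    intro i
    rw [ZMod.valMinAbs_spec]
    refine ⟨rfl, ?_, ?_⟩
    · have := (hx i).1
      have : (-(q : ℝ)) < x i * 2 := by linarith
      exact_mod_cast this
    · have : (x i : ℝ) * 2 ≤ q := by linarith [(hx i).2]
      exact_mod_cast this
  have hs := summable_gaussZ σ hσ m
  have hs2 := summable_gaussZ (2 * σ) (by positivity) m
  have hS : rhoZm σ m = ∑' k, gaussZ σ m k := rfl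
  have hSpos : 0 < rhoZm σ m := by
    rw [hS]
    exact hs.tsum_pos (fun _ => (gaussZ_pos _ _ _).le) 0 (gaussZ_pos _ _ _)
  let j : (Fin m → ℤ) → (Fin m → ℤ) := fun k i => x i + q * k i
  have hj : Function.Injective j := by
    intro a b hab
    funext i
    have h1 := congrFun hab i
    simp only [j, add_right_inj] at h1
    exact mul_left_cancel₀ (by exact_mod_cast (by omega : q ≠ 0)) h1
  have hT : thetaM σ q m (fun i => (x i : ZMod q)) = (∑' k, gaussZ σ m (j k)) / rhoZm σ m := by
    simp only [thetaM, gaussZ, hv, j]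
    push_cast
    rfl
  have hD : Dgauss σ m x = gaussZ σ m x / rhoZm σ m := rfl
  have hsj : Summable (fun k => gaussZ σ m (j k)) := hs.comp_injective hj
  have hs2j : Summable (fun k => gaussZ (2 * σ) m (j k)) := hs2.comp_injective hj
  have hj0 : j 0 = x := by funext i; simp [j]
  have hsplit := hsj.tsum_eq_add_tsum_ite 0
  rw [hj0] at hsplit
  have ht : (m : ℝ) ≤ (q : ℝ) ^ 2 / (4 * σ ^ 2) := by
    rw [le_div_iff₀ (by positivity)]
    have h := pow_le_pow_left₀ (by positivity) hqs 2
    rw [mul_pow, Real.sq_sqrt (Nat.cast_nonneg m)] at h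
    linarith
  set c := Real.exp (-(3 / 4) * Real.pi * ((q : ℝ) ^ 2 / (4 * σ ^ 2))) with hc
  have hpt : ∀ k, (if k = 0 then 0 else gaussZ σ m (j k)) ≤ c * gaussZ (2 * σ) m (j k) := by
    intro k
    split_ifs with h
    · exact mul_nonneg (Real.exp_pos _).le (gaussZ_pos _ _ _).le
    · obtain ⟨i, hi⟩ := Function.ne_iff.mp h
      have h1 := coord_bound q (x i) (k i) hi (hx i)
      have h2 : ((j k i : ℤ) : ℝ) ^ 2 ≤ ∑ i, ((j k i : ℤ) : ℝ) ^ 2 :=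
        Finset.single_le_sum (f := fun i => ((j k i : ℤ) : ℝ) ^ 2)
          (fun _ _ => sq_nonneg _) (Finset.mem_univ i)
      have h3 := h1.trans h2
      rw [hc, gaussZ, gaussZ, ← Real.exp_add]
      apply Real.exp_le_exp.mpr
      set N := ∑ i, ((j k i : ℤ) : ℝ) ^ 2
      have h4 : 0 ≤ (3 / 4) * Real.pi / σ ^ 2 * (N - (q : ℝ) ^ 2 / 4) :=
        mul_nonneg (by positivity) (by linarith)
      have h5 : -(3 / 4) * Real.pi * ((q : ℝ) ^ 2 / (4 * σ ^ 2)) + -Real.pi * N / (2 * σ) ^ 2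
          - (-Real.pi * N / σ ^ 2) = (3 / 4) * Real.pi / σ ^ 2 * (N - (q : ℝ) ^ 2 / 4) := by
        field_simp
        ring
      linarith
  have hite0 : ∀ k, 0 ≤ (if k = 0 then 0 else gaussZ σ m (j k)) := by
    intro k
    split_ifs
    · exact le_rfl
    · exact (gaussZ_pos _ _ _).le
  have hsite : Summable (fun k => if k = 0 then 0 else gaussZ σ m (j k)) :=
    Summable.of_nonneg_of_le hite0 hpt (hs2j.mul_left c)
  have htail : ∑' k, (if k = 0 then 0 else gaussZ σ m (j k)) ≤
      Real.exp (-(q : ℝ) ^ 2 / (4 * σ ^ 2)) * rhoZm σ m := by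
    calc _ ≤ ∑' k, c * gaussZ (2 * σ) m (j k) := hsite.tsum_le_tsum hpt (hs2j.mul_left c)
      _ = c * ∑' k, gaussZ (2 * σ) m (j k) := tsum_mul_left
      _ ≤ c * ∑' k, gaussZ (2 * σ) m k := by
        refine mul_le_mul_of_nonneg_left ?_ (Real.exp_pos _).le
        exact Summable.tsum_le_tsum_of_inj j hj (fun _ _ => (gaussZ_pos _ _ _).le)
          (fun _ => le_rfl) hs2j hs2
      _ ≤ c * (3 ^ m * rhoZm σ m) :=
        mul_le_mul_of_nonneg_left (tsum_double σ hσ m) (Real.exp_pos _).le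
      _ = (c * 3 ^ m) * rhoZm σ m := by ring
      _ ≤ _ := by
        refine mul_le_mul_of_nonneg_right ?_ hSpos.le
        rw [neg_div]
        exact final_const m _ ht
  have hA : Dgauss σ m x ≤ thetaM σ q m (fun i => (x i : ZMod q)) := by
    rw [hD, hT, hsplit]
    have := tsum_nonneg (L := SummationFilter.unconditional _) hite0
    gcongr
    linarith
  have hB : thetaM σ q m (fun i => (x i : ZMod q)) ≤
        Dgauss σ m x + Real.exp (-(q : ℝ) ^ 2 / (4 * σ ^ 2)) := by
    rw [hD, hT, hsplit, add_div]
    gcongr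
    rwa [div_le_iff₀ hSpos]
  refine ⟨hA, hB, Real.sqrt_le_sqrt hA, ?_⟩
  have hD0 : 0 ≤ Dgauss σ m x := by
    rw [hD]; exact div_nonneg (gaussZ_pos _ _ _).le hSpos.le
  have he : Real.exp (-(q : ℝ) ^ 2 / (4 * σ ^ 2)) =
      Real.exp (-(q : ℝ) ^ 2 / (8 * σ ^ 2)) ^ 2 := by
    rw [← Real.exp_nat_mul]
    congr 1
    field_simp
    norm_num
  rw [he] at hB
  have hE := Real.exp_pos (-(q : ℝ) ^ 2 / (8 * σ ^ 2))
  apply Real.sqrt_le_iff.mpr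
  refine ⟨by positivity, hB.trans ?_⟩
  have := Real.sq_sqrt hD0
  nlinarith [mul_nonneg (Real.sqrt_nonneg (Dgauss σ m x)) hE.le]
end

section
/- Let m ≥ 1 and q ≥ 2 be integers and σ a real number with 2 ≤ σ ≤ q/√(8·m·ln q). Then Σ_{e,e' ∈ (ℤ/qℤ)^m, e ≠ e'} √(ϑ_{σ,q}(e)) · √(ϑ_{σ,q}(e')) ≤ (q^{m/2} + 1)². -/
open scoped Classical

lemma sum_thetaM_le_one (m q : ℕ) [NeZero q] (σ : ℝ) :
    ∑ e : Fin m → ZMod q, thetaM σ q m e ≤ 1 := by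
  set f : (Fin m → ℤ) → ℝ := fun k =>
    Real.exp (-Real.pi * (∑ i, ((k i : ℝ)) ^ 2) / σ ^ 2) with hf
  have hr : rhoZm σ m = ∑' k, f k := rfl
  by_cases hs : Summable f
  · let g : (Fin m → ZMod q) × (Fin m → ℤ) → (Fin m → ℤ) :=
      fun p i => (p.1 i).valMinAbs + q * p.2 i
    have hg : Function.Injective g := by
      rintro ⟨x, k⟩ ⟨y, l⟩ h
      have h1 : ∀ i, (x i).valMinAbs + q * k i = (y i).valMinAbs + q * l i :=
        fun i => congrFun h i
      have hx : x = y := by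
        funext i
        have := congrArg (Int.cast : ℤ → ZMod q) (h1 i)
        simpa using this
      subst hx
      have hk : k = l := by
        funext i
        have h2 := h1 i
        have hq : (q : ℤ) ≠ 0 := by exact_mod_cast NeZero.ne q
        exact mul_left_cancel₀ hq (add_left_cancel h2)
      rw [hk]
    have hsg : Summable (fun p => f (g p)) := hs.comp_injective hg
    have hle : ∑' p, f (g p) ≤ ∑' k, f k :=
      hsg.tsum_le_tsum_of_inj g hg (fun _ _ => (Real.exp_pos _).le) (fun _ => le_rfl) hs
    have hth : ∀ e, thetaM σ q m e = (∑' k, f (g (e, k))) / rhoZm σ m := by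
      intro e
      simp [thetaM, hf, g]
    simp_rw [hth]
    rw [← Finset.sum_div]
    apply div_le_one_of_le₀
    · rw [hsg.tsum_prod, tsum_fintype] at hle
      exact hle
    · exact tsum_nonneg (fun _ => (Real.exp_pos _).le)
  · have h0 : rhoZm σ m = 0 := hr.trans (tsum_eq_zero_of_not_summable hs)
    simp [thetaM, h0]

/-- For `m ≥ 1`, `q ≥ 2` and `2 ≤ σ ≤ q/√(8·m·ln q)`:
`Σ_{e ≠ e' ∈ (ℤ/qℤ)^m} √(ϑ_{σ,q}(e))·√(ϑ_{σ,q}(e')) ≤ (q^{m/2} + 1)²`. -/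
theorem stmt_8 (m q : ℕ) [NeZero q] (hm : 1 ≤ m) (hq : 2 ≤ q) (σ : ℝ)
    (hσ1 : 2 ≤ σ) (hσ2 : σ ≤ (q : ℝ) / Real.sqrt (8 * m * Real.log q)) :
    (∑ e : Fin m → ZMod q, ∑ e' : Fin m → ZMod q,
        if e ≠ e' then Real.sqrt (thetaM σ q m e) * Real.sqrt (thetaM σ q m e') else 0) ≤
      ((q : ℝ) ^ ((m : ℝ) / 2) + 1) ^ 2 := by
  have hnn : ∀ e, 0 ≤ thetaM σ q m e := fun e =>
    div_nonneg (tsum_nonneg fun _ => (Real.exp_pos _).le) (tsum_nonneg fun _ => (Real.exp_pos _).le)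
  have h1 : (∑ e : Fin m → ZMod q, ∑ e' : Fin m → ZMod q,
        if e ≠ e' then Real.sqrt (thetaM σ q m e) * Real.sqrt (thetaM σ q m e') else 0) ≤
      (∑ e : Fin m → ZMod q, Real.sqrt (thetaM σ q m e)) ^ 2 := by
    rw [sq, Finset.sum_mul_sum]
    refine Finset.sum_le_sum fun e _ => Finset.sum_le_sum fun e' _ => ?_
    split_ifs
    · exact le_rfl
    · positivity
  have h2 : (∑ e : Fin m → ZMod q, Real.sqrt (thetaM σ q m e)) ^ 2 ≤ (q : ℝ) ^ m := by
    refine sq_sum_le_card_mul_sum_sq.trans ?_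
    simp_rw [Real.sq_sqrt (hnn _)]
    have hc : ((Finset.univ : Finset (Fin m → ZMod q)).card : ℝ) = (q : ℝ) ^ m := by
      simp [ZMod.card]
    rw [hc]
    exact mul_le_of_le_one_right (by positivity) (sum_thetaM_le_one m q σ)
  have h3 : (q : ℝ) ^ m = ((q : ℝ) ^ ((m : ℝ) / 2)) ^ 2 := by
    rw [← Real.rpow_natCast, ← Real.rpow_natCast, ← Real.rpow_mul (by positivity)]
    norm_num
  have h4 : 0 ≤ (q : ℝ) ^ ((m : ℝ) / 2) := by positivity
  nlinarith
end

section
/- Let d > 2 be a power of two and q a prime number with q ≡ 3 (mod 8). Then the polynomial X^d + 1 ∈ (ℤ/qℤ)[X] is the product of two distinct monic irreducible polynomials, each of degree d/2; consequently, the quotient ring R_q := (ℤ/qℤ)[X]/(X^d + 1) is isomorphic, as a ring, to the product of two finite fields each of cardinality q^{d/2}. -/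
open Polynomial in
lemma quot_equiv_aux (q n : ℕ) [Fact q.Prime] (g : Polynomial (ZMod q)) (hg : g.Monic)
    (hi : Irreducible g) (hn : g.natDegree = n) :
    Nonempty ((Polynomial (ZMod q) ⧸ Ideal.span {g}) ≃+* GaloisField q n) := by
  have : Fact (Irreducible g) := ⟨hi⟩
  have := hg.finite_adjoinRoot
  have : Finite (AdjoinRoot g) := Module.finite_of_finite (ZMod q)
  have hc : Nat.card (AdjoinRoot g) = q ^ n := by
    rw [Module.natCard_eq_pow_finrank (K := ZMod q), (AdjoinRoot.powerBasis hi.ne_zero).finrank,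
      AdjoinRoot.powerBasis_dim, hn, Nat.card_zmod]
  exact ⟨(GaloisField.algEquivGaloisField q n hc).toRingEquiv⟩

lemma pow_form_aux (q n : ℕ) (hq : q % 8 = 3) :
    ∃ m, q ^ 2 ^ (n + 1) = 1 + 2 ^ (n + 3) * (2 * m + 1) := by
  induction n with
  | zero =>
    obtain ⟨t, rfl⟩ : ∃ t, q = 8 * t + 3 := ⟨q / 8, by omega⟩
    exact ⟨4 * t ^ 2 + 3 * t, by ring⟩
  | succ n ih =>
    obtain ⟨m, hm⟩ := ih
    refine ⟨m + 2 ^ (n + 1) * (2 * m + 1) ^ 2, ?_⟩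
    rw [pow_succ 2 (n + 1), pow_mul, hm]
    ring

lemma order_aux (q n : ℕ) (hq : q % 8 = 3) (h : q.Coprime (2 ^ (n + 3))) :
    orderOf (ZMod.unitOfCoprime q h) = 2 ^ (n + 1) := by
  apply orderOf_eq_prime_pow
  · intro h1
    have h2 := congrArg Units.val h1
    simp only [Units.val_pow_eq_pow_val, ZMod.coe_unitOfCoprime, Units.val_one] at h2
    cases n with
    | zero =>
      have h3 : ((q : ℕ) : ZMod (2 ^ (0 + 3))) = ((1 : ℕ) : ZMod _) := by simpa using h2
      rw [ZMod.natCast_eq_natCast_iff] at h3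
      have : q % 8 = 1 % 8 := h3
      omega
    | succ n =>
      obtain ⟨m, hm⟩ := pow_form_aux q n hq
      have h3 : ((q ^ 2 ^ (n + 1) : ℕ) : ZMod (2 ^ (n + 1 + 3))) = ((1 : ℕ) : ZMod _) := by
        push_cast; exact h2
      rw [hm, ZMod.natCast_eq_natCast_iff] at h3
      have h4 := (Nat.modEq_iff_dvd' (by omega)).1 h3.symm
      rw [Nat.add_sub_cancel_left, show n + 1 + 3 = (n + 3) + 1 by ring, pow_succ,
        Nat.mul_dvd_mul_iff_left (by positivity)] at h4
      omega
  · ext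
    obtain ⟨m, hm⟩ := pow_form_aux q n hq
    simp only [Units.val_pow_eq_pow_val, ZMod.coe_unitOfCoprime, Units.val_one]
    rw [← Nat.cast_pow, hm]
    push_cast
    have : (2 : ZMod (2 ^ (n + 3))) ^ (n + 3) = 0 := by
      exact_mod_cast ZMod.natCast_self (2 ^ (n + 3))
    rw [this]; simp

open Polynomial in
lemma deg_aux (q m : ℕ) [Fact q.Prime] (hm : 0 < m) (a : ZMod q) :
    (X ^ (2 * m) + C a * X ^ m - 1 : (ZMod q)[X]).natDegree = 2 * m ∧
    (X ^ (2 * m) + C a * X ^ m - 1 : (ZMod q)[X]).Monic := by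
  have h : (C a * X ^ m - 1 : (ZMod q)[X]).degree < (2 * m : ℕ) := by
    apply lt_of_le_of_lt (degree_sub_le _ _)
    apply max_lt
    · exact lt_of_le_of_lt (degree_C_mul_X_pow_le _ _) (by exact_mod_cast (by omega))
    · rw [degree_one]; exact_mod_cast (by omega)
  rw [add_sub_assoc]
  exact ⟨natDegree_eq_of_degree_eq_some (by rw [degree_add_eq_left_of_degree_lt] <;> (simp only [degree_X_pow, h])),
    monic_X_pow_add h⟩

/-- Let `d > 2` be a power of two and `q` a prime with `q ≡ 3 (mod 8)`. Then
`X^d + 1 ∈ (ℤ/qℤ)[X]` is the product of two distinct monic irreducible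
polynomials, each of degree `d/2`; consequently
`R_q = (ℤ/qℤ)[X]/(X^d + 1)` is isomorphic, as a ring, to the product of two
finite fields, each of cardinality `q^{d/2}`. -/
theorem stmt_14 (d q : ℕ) [Fact q.Prime] (hd : 2 < d) (hd2 : ∃ k, d = 2 ^ k)
    (hq3 : q % 8 = 3) :
    (∃ g h : Polynomial (ZMod q),
        g.Monic ∧ h.Monic ∧ Irreducible g ∧ Irreducible h ∧ g ≠ h ∧
          g.natDegree = d / 2 ∧ h.natDegree = d / 2 ∧
          (Polynomial.X ^ d + 1 : Polynomial (ZMod q)) = g * h) ∧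
      Nonempty
        ((Polynomial (ZMod q) ⧸
            Ideal.span {(Polynomial.X ^ d + 1 : Polynomial (ZMod q))}) ≃+*
          GaloisField q (d / 2) × GaloisField q (d / 2)) ∧
      Nat.card (GaloisField q (d / 2)) = q ^ (d / 2) := by
  obtain ⟨k, rfl⟩ := hd2
  obtain ⟨n, rfl⟩ : ∃ n, k = n + 2 := by
    refine ⟨k - 2, ?_⟩
    rcases k with _ | _ | k
    · simp at hd
    · simp at hd
    · omega
  have hq2 : q ≠ 2 := by rintro rfl; omega
  have hp : q.Prime := Fact.out
  have hdiv : 2 ^ (n + 2) / 2 = 2 ^ (n + 1) := by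
    rw [pow_succ, Nat.mul_div_cancel _ (by norm_num)]
  rw [hdiv]
  have hnd : ¬ q ∣ 2 ^ (n + 3) := fun h =>
    hq2 ((Nat.prime_dvd_prime_iff_eq hp Nat.prime_two).1 (hp.dvd_of_dvd_pow h))
  obtain ⟨a, ha⟩ := (ZMod.exists_sq_eq_neg_two_iff hq2).2 (Or.inr hq3)
  have hcyc : Polynomial.cyclotomic (2 ^ (n + 3)) (ZMod q) = Polynomial.X ^ 2 ^ (n + 2) + 1 := by
    rw [Polynomial.cyclotomic_prime_pow_eq_geom_sum Nat.prime_two]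
    simp [Finset.sum_range_succ, add_comm]
  have hm : 0 < 2 ^ n := by positivity
  obtain ⟨gd, gm⟩ := deg_aux q (2 ^ n) hm a
  obtain ⟨hdeg, hmon⟩ := deg_aux q (2 ^ n) hm (-a)
  have hfac : (Polynomial.X ^ 2 ^ (n + 2) + 1 : Polynomial (ZMod q)) =
      (Polynomial.X ^ (2 * 2 ^ n) + Polynomial.C a * Polynomial.X ^ 2 ^ n - 1) *
      (Polynomial.X ^ (2 * 2 ^ n) + Polynomial.C (-a) * Polynomial.X ^ 2 ^ n - 1) := by
    have hC : (Polynomial.C a * Polynomial.C a : Polynomial (ZMod q)) = -2 := by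
      rw [← Polynomial.C_mul, ← ha, Polynomial.C_neg]; rfl
    rw [show 2 ^ (n + 2) = 2 ^ n * 4 by ring, mul_comm 2 (2 ^ n), pow_mul, pow_mul,
      Polynomial.C_neg]
    linear_combination (-(Polynomial.X ^ 2 ^ n) ^ 2) * (-hC)
  have hne : (Polynomial.X ^ (2 * 2 ^ n) + Polynomial.C a * Polynomial.X ^ 2 ^ n - 1 :
      Polynomial (ZMod q)) ≠
      Polynomial.X ^ (2 * 2 ^ n) + Polynomial.C (-a) * Polynomial.X ^ 2 ^ n - 1 := by
    intro h
    have h1 := congrArg (fun p => Polynomial.eval 1 p) h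
    simp only [Polynomial.eval_sub, Polynomial.eval_add, Polynomial.eval_mul, Polynomial.eval_pow,
      Polynomial.eval_X, Polynomial.eval_C, Polynomial.eval_one, one_pow] at h1
    have h20 : (2 : ZMod q) ≠ 0 := by
      intro h0
      have : ((2 : ℕ) : ZMod q) = 0 := by exact_mod_cast h0
      rw [ZMod.natCast_eq_zero_iff] at this
      exact hq2 ((Nat.prime_dvd_prime_iff_eq hp Nat.prime_two).1 this)
    have h2 : 2 * a = 0 := by linear_combination h1
    have h3 : a = 0 := (mul_eq_zero.1 h2).resolve_left h20
    rw [h3] at ha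
    apply h20
    linear_combination -ha
  generalize (Polynomial.X ^ (2 * 2 ^ n) + Polynomial.C a * Polynomial.X ^ 2 ^ n - 1 :
      Polynomial (ZMod q)) = g at *
  generalize (Polynomial.X ^ (2 * 2 ^ n) + Polynomial.C (-a) * Polynomial.X ^ 2 ^ n - 1 :
      Polynomial (ZMod q)) = h at *
  rw [← pow_succ'] at gd hdeg
  have gi : Irreducible g := ZMod.irreducible_of_dvd_cyclotomic_of_natDegree hnd
    (by rw [hcyc, hfac]; exact dvd_mul_right _ _) (by rw [gd, order_aux q n hq3])
  have hi : Irreducible h := ZMod.irreducible_of_dvd_cyclotomic_of_natDegree hnd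
    (by rw [hcyc, hfac]; exact dvd_mul_left _ _) (by rw [hdeg, order_aux q n hq3])
  refine ⟨⟨g, h, gm, hmon, gi, hi, hne, gd, hdeg, hfac⟩, ?_, GaloisField.card q _ (by positivity)⟩
  have hcop : IsCoprime g h := by
    rw [gi.coprime_iff_not_dvd]
    intro hdvd
    exact hne (Polynomial.eq_of_monic_of_associated gm hmon
      (gi.associated_of_dvd hi hdvd))
  obtain ⟨e1⟩ := quot_equiv_aux q _ g gm gi gd
  obtain ⟨e2⟩ := quot_equiv_aux q _ h hmon hi hdeg
  exact ⟨(Ideal.quotEquivOfEq (by rw [hfac, Ideal.span_singleton_mul_span_singleton])).trans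
    ((Ideal.quotientMulEquivQuotientProd (Ideal.span {g}) (Ideal.span {h})
      ((Ideal.isCoprime_span_singleton_iff _ _).2 hcop)).trans (RingEquiv.prodCongr e1 e2))⟩
end

section
/- Let d > 2 be a power of two, q a prime number with q ≡ 3 (mod 8), m ≥ n ≥ 1 integers, and R_q := (ℤ/qℤ)[X]/(X^d + 1). Then for every fixed v ∈ R_q^m with v ≠ 0, the number of matrices A ∈ R_q^{m×n} such that v = A·s for some s ∈ R_q^n is at most q^{dmn} · q^{dn} / q^{dm/2}; i.e., the proportion of such matrices among all of R_q^{m×n} is at most q^{d(n − m/2)}. -/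
/-- `R_q = (ℤ/qℤ)[X]/(X^d + 1)`. -/
abbrev Rq (d q : ℕ) :=
  Polynomial (ZMod q) ⧸ Ideal.span {(Polynomial.X ^ d + 1 : Polynomial (ZMod q))}


lemma aux_arith (q k t : ℕ) (hq3 : q % 8 = 3) (hk : k ≠ 0) (ht : 2 ≤ t)
    (h : 2 ^ (t + 1) ∣ q ^ k - 1) : 2 ^ (t - 1) ≤ k := by
  have hq1 : 1 < q := by omega
  have h8 : 8 ∣ q ^ k - 1 := dvd_trans (pow_dvd_pow 2 (by omega : 3 ≤ t + 1)) h
  have hpos : 1 < q ^ k := Nat.one_lt_pow hk hq1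
  have heven : Even k := by
    by_contra ho
    rw [Nat.not_even_iff_odd] at ho
    obtain ⟨j, rfl⟩ := ho
    have : q ^ (2 * j + 1) % 8 = 3 := by
      rw [Nat.pow_mod, hq3, pow_succ, pow_mul, Nat.mul_mod, Nat.pow_mod]
      norm_num
    omega
  have h1 := padicValNat.pow_two_sub_one hq1 (by omega) hk heven
  have h2 : padicValNat 2 (q + 1) < 3 := by
    by_contra hc
    have := (padicValNat_dvd_iff_le (p := 2) (by omega : q + 1 ≠ 0)).mpr (not_lt.mp hc)
    omega
  have h3 : padicValNat 2 (q - 1) < 2 := by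
    by_contra hc
    have := (padicValNat_dvd_iff_le (p := 2) (by omega : q - 1 ≠ 0)).mpr (not_lt.mp hc)
    omega
  have h4 := (padicValNat_dvd_iff_le (p := 2) (by omega : q ^ k - 1 ≠ 0)).mp h
  have h5 : t - 1 ≤ padicValNat 2 k := by omega
  exact Nat.le_of_dvd (Nat.pos_of_ne_zero hk) ((padicValNat_dvd_iff_le (p := 2) hk).mpr h5)

lemma aux_span {R : Type*} [CommRing R] [Finite R] (c : ℕ)
    (H : ∀ M : Ideal R, M.IsMaximal → c ≤ Nat.card (R ⧸ M)) (r : R) (hr : r ≠ 0) :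
    c ≤ Nat.card (Submodule.span R {r}) := by
  have hne : Ideal.torsionOf R R r ≠ ⊤ := by
    intro h
    rw [Ideal.torsionOf_eq_top_iff] at h
    exact hr h
  obtain ⟨M, hM, hle⟩ := Ideal.exists_le_maximal _ hne
  rw [← Nat.card_congr (Ideal.quotTorsionOfEquivSpanSingleton R R r).toEquiv]
  haveI : Finite (R ⧸ Ideal.torsionOf R R r) := Quotient.finite _
  exact (H M hM).trans
    (Nat.card_le_card_of_surjective (Ideal.Quotient.factor hle) (Ideal.Quotient.factor_surjective hle))

lemma aux_fiber {R : Type*} [CommRing R] [Finite R] (c m n : ℕ)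
    (H : ∀ M : Ideal R, M.IsMaximal → c ≤ Nat.card (R ⧸ M)) (v : Fin m → R) (hv : v ≠ 0)
    (s : Fin n → R) :
    {A : Matrix (Fin m) (Fin n) R | v = A.mulVec s}.ncard * c ^ m ≤ Nat.card R ^ (m * n) := by
  haveI : Finite (Matrix (Fin m) (Fin n) R) := inferInstanceAs (Finite (Fin m → Fin n → R))
  by_cases hs : s = 0
  · have : {A : Matrix (Fin m) (Fin n) R | v = A.mulVec s} = ∅ := by
      ext A; simp [hs, hv]
    simp [this]
  obtain ⟨j, hj⟩ : ∃ j, s j ≠ 0 := by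
    by_contra hc; push Not at hc; exact hs (funext hc)
  let Φ : Matrix (Fin m) (Fin n) R →+ (Fin m → R) :=
    { toFun := fun A => A.mulVec s
      map_zero' := Matrix.zero_mulVec s
      map_add' := fun A B => Matrix.add_mulVec A B s }
  have hcard : Nat.card Φ.ker * Nat.card Φ.range = Nat.card R ^ (m * n) := by
    rw [← AddSubgroup.index_ker, AddSubgroup.card_mul_index]
    change Nat.card (Fin m → Fin n → R) = _
    rw [Nat.card_fun, Nat.card_fun]
    simp [← pow_mul, mul_comm]
  rw [← hcard]
  apply Nat.mul_le_mul
  · rcases Set.eq_empty_or_nonempty {A : Matrix (Fin m) (Fin n) R | v = A.mulVec s} with h | ⟨A₀, hA₀⟩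
    · simp [h]
    · rw [← Nat.card_coe_set_eq]
      refine Nat.card_le_card_of_injective
        (fun A => (⟨A.1 - A₀, ?_⟩ : Φ.ker)) ?_
      · have h1 : Φ A.1 = v := A.2.symm
        have h2 : Φ A₀ = v := hA₀.symm
        rw [AddMonoidHom.mem_ker, map_sub, h1, h2, sub_self]
      · intro A B hAB
        have := congrArg Subtype.val hAB
        exact Subtype.ext (sub_left_injective this)
  · have h1 : c ^ m ≤ Nat.card (Fin m → Submodule.span R {s j}) := by
      rw [Nat.card_fun]
      simpa using Nat.pow_le_pow_left (aux_span c H (s j) hj) m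
    refine h1.trans (Nat.card_le_card_of_injective
      (fun w => (⟨fun i => (w i : R), ?_⟩ : Φ.range)) ?_)
    · have := fun i => Submodule.mem_span_singleton.mp (w i).2
      choose a ha using this
      refine ⟨Matrix.of fun i => Pi.single j (a i), ?_⟩
      ext i
      change Matrix.mulVec _ s i = _
      simp [Matrix.mulVec, ← ha]
    · intro w w' h
      have := congrArg Subtype.val h
      funext i
      exact Subtype.ext (congrFun this i)

lemma aux_count {R : Type*} [CommRing R] [Finite R] (c m n : ℕ)
    (H : ∀ M : Ideal R, M.IsMaximal → c ≤ Nat.card (R ⧸ M)) (v : Fin m → R) (hv : v ≠ 0) :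
    {A : Matrix (Fin m) (Fin n) R | ∃ s : Fin n → R, v = A.mulVec s}.ncard * c ^ m ≤
      Nat.card R ^ (m * n) * Nat.card R ^ n := by
  haveI : Fintype (Fin n → R) := Fintype.ofFinite _
  rw [Set.setOf_exists]
  calc _ ≤ (∑ s : Fin n → R, {A : Matrix (Fin m) (Fin n) R | v = A.mulVec s}.ncard) * c ^ m :=
        Nat.mul_le_mul_right _ (Set.ncard_iUnion_le_of_fintype _)
    _ ≤ ∑ s : Fin n → R, Nat.card R ^ (m * n) := by
        rw [Finset.sum_mul]
        exact Finset.sum_le_sum fun s _ => aux_fiber c m n H v hv s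
    _ = _ := by
        rw [Finset.sum_const, Finset.card_univ, ← Nat.card_eq_fintype_card, Nat.card_fun]
        simp [mul_comm]

lemma aux_monic (d q : ℕ) [Fact q.Prime] (hd : 2 < d) :
    (Polynomial.X ^ d + 1 : Polynomial (ZMod q)).Monic := by
  simpa using Polynomial.monic_X_pow_add_C (1 : ZMod q) (by omega : d ≠ 0)

lemma aux_finite (d q : ℕ) [Fact q.Prime] (hd : 2 < d) : Module.Finite (ZMod q) (Rq d q) :=
  (aux_monic d q hd).finite_quotient

lemma aux_card (d q : ℕ) [Fact q.Prime] (hd : 2 < d) : Nat.card (Rq d q) = q ^ d := by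
  haveI := aux_finite d q hd
  rw [Module.natCard_eq_pow_finrank (K := ZMod q), finrank_quotient_span_eq_natDegree]
  have := Polynomial.natDegree_X_pow_add_C (n := d) (r := (1 : ZMod q))
  rw [Polynomial.C_1] at this
  rw [this, Nat.card_zmod]

lemma aux_max (d q : ℕ) [Fact q.Prime] (hd : 2 < d) (hd2 : ∃ k, d = 2 ^ k)
    (hq3 : q % 8 = 3) (M : Ideal (Rq d q)) (hM : M.IsMaximal) :
    q ^ (d / 2) ≤ Nat.card (Rq d q ⧸ M) := by
  haveI := aux_finite d q hd
  haveI : Finite (Rq d q) := Module.finite_of_finite (ZMod q)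
  letI : Field (Rq d q ⧸ M) := Ideal.Quotient.field M
  haveI : Finite (Rq d q ⧸ M) := Quotient.finite _
  obtain ⟨t, rfl⟩ := hd2
  have ht : 2 ≤ t := by
    by_contra hc
    have : t ≤ 1 := by omega
    have := Nat.pow_le_pow_right (n := 2) (by norm_num) this
    omega
  let x : Rq (2 ^ t) q ⧸ M := Ideal.Quotient.mk M (Ideal.Quotient.mk _ Polynomial.X)
  have hx : x ^ 2 ^ t = -1 := by
    rw [eq_neg_iff_add_eq_zero]
    have : (Ideal.Quotient.mk (Ideal.span {(Polynomial.X ^ 2 ^ t + 1 : Polynomial (ZMod q))}))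
        (Polynomial.X ^ 2 ^ t + 1) = 0 :=
      Ideal.Quotient.eq_zero_iff_mem.mpr (Ideal.mem_span_singleton_self _)
    have h2 := congrArg (Ideal.Quotient.mk M) this
    simpa only [map_add, map_pow, map_one, map_zero] using h2
  obtain ⟨k, hk⟩ : ∃ k, Nat.card (Rq (2 ^ t) q ⧸ M) = q ^ k := by
    refine ⟨Module.finrank (ZMod q) (Rq (2 ^ t) q ⧸ M), ?_⟩
    rw [Module.natCard_eq_pow_finrank (K := ZMod q), Nat.card_zmod]
  haveI : CharP (Rq (2 ^ t) q ⧸ M) q := charP_of_injective_algebraMap' (ZMod q) q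
  have hneg : (-1 : Rq (2 ^ t) q ⧸ M) ≠ 1 :=
    Ring.neg_one_ne_one_of_char_ne_two (by rw [ringChar.eq _ q]; omega)
  have hx0 : x ≠ 0 := by
    intro h
    rw [h, zero_pow (by positivity)] at hx
    exact one_ne_zero (neg_eq_zero.mp hx.symm)
  have hord : orderOf (Units.mk0 x hx0) = 2 ^ (t + 1) := by
    rw [← orderOf_units, Units.val_mk0]
    apply orderOf_eq_prime_pow
    · rw [hx]; exact hneg
    · rw [pow_succ, pow_mul, hx]; norm_num
  have hdvd := orderOf_dvd_natCard (Units.mk0 x hx0)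
  rw [hord, Nat.card_units, hk] at hdvd
  have hk0 : k ≠ 0 := by
    rintro rfl
    have := Finite.one_lt_card (α := Rq (2 ^ t) q ⧸ M)
    rw [hk] at this
    simp at this
  have := aux_arith q k t hq3 hk0 ht hdvd
  rw [hk]
  apply Nat.pow_le_pow_right (by omega)
  obtain ⟨u, rfl⟩ : ∃ u, t = u + 1 := ⟨t - 1, by omega⟩
  rw [pow_succ]
  simpa using this

/-- Let `d > 2` be a power of two, `q` a prime with `q ≡ 3 (mod 8)` and
`m ≥ n ≥ 1`. For every fixed `v ∈ R_q^m` with `v ≠ 0`, the number of matrices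
`A ∈ R_q^{m×n}` such that `v = A·s` for some `s ∈ R_q^n` is at most
`q^{dmn}·q^{dn}/q^{dm/2}`. -/
theorem stmt_15 (d q m n : ℕ) [Fact q.Prime] (hd : 2 < d) (hd2 : ∃ k, d = 2 ^ k)
    (hq3 : q % 8 = 3) (hn : 1 ≤ n) (hmn : n ≤ m)
    (v : Fin m → Rq d q) (hv : v ≠ 0) :
    ({A : Matrix (Fin m) (Fin n) (Rq d q) |
          ∃ s : Fin n → Rq d q, v = A.mulVec s}.ncard : ℝ) ≤
      (q : ℝ) ^ (d * m * n) * (q : ℝ) ^ (d * n) / (q : ℝ) ^ (d * m / 2) := by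
  haveI := aux_finite d q hd
  haveI : Finite (Rq d q) := Module.finite_of_finite (ZMod q)
  have h := aux_count (q ^ (d / 2)) m n (aux_max d q hd hd2 hq3) v hv
  rw [aux_card d q hd, ← pow_mul, ← pow_mul, ← pow_mul] at h
  have he : d * m / 2 = d / 2 * m := by
    obtain ⟨k, rfl⟩ := hd2
    have hk : k ≠ 0 := by rintro rfl; simp at hd
    exact (Nat.div_mul_right_comm (dvd_pow_self 2 hk) m).symm
  have hq0 : (0 : ℝ) < q := by exact_mod_cast (Fact.out : q.Prime).pos
  rw [le_div_iff₀ (by positivity), he, mul_assoc d m n]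
  exact_mod_cast h
end
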